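/- arXiv:2603.18452 — 7 statements merged into one kernel-verified Lean document; each statement's English description precedes it below -/
import Mathlib

section
/- For every i ∈ {1,…,n}, the expected degree of node V_i under the Pólya joint law equals nρ: Σ_{z ∈ {0,1}^n} p(z) · deg_i(z) = n·ρ. -/
/-!
Fixing one draw, at any position, to be red multiplies the weight of the remaining draws by `R` and
replaces `R` by `R + Δ`; fixing it to be black does the same to `B`. Hence the total mass is
computed by induction, and the marginal `E[z_j] = R / (R + B)` does not depend on `j`. As `deg_i`
is a combination of the draws whose coefficients add up to `i + (n - i) = n`, linearity of
expectation gives `n * (R / (R + B))`.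
-/

open Finset

/-- The Pólya joint law on binary `n`-tuples. -/
noncomputable def polyaP (n : ℕ) (R B Δ : ℝ) (z : Fin n → Fin 2) : ℝ :=
  (∏ i ∈ Finset.range (∑ t, (z t : ℕ)), (R + i * Δ)) *
    (∏ j ∈ Finset.range (n - ∑ t, (z t : ℕ)), (B + j * Δ)) /
    ∏ m ∈ Finset.range n, (R + B + m * Δ)

/-- The degree of node `V_i` (here `i : Fin n` represents the paper's node `i+1`,
so the paper's `deg(V_i) = i·z_i + Σ_{j=i+1}^n z_j`). -/
def degNode (n : ℕ) (i : Fin n) (z : Fin n → Fin 2) : ℕ :=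
  ((i : ℕ) + 1) * (z i : ℕ) + ∑ j ∈ Finset.univ.filter (fun j => i < j), (z j : ℕ)

section PochhammerStep

variable {A : Type*} [CommSemiring A]

/-- The Pochhammer `d`-symbol `a (a + d) (a + 2 d) ⋯ (a + (k - 1) d)`, the product of `k` successive
urn contents; Mathlib's `ascPochhammer` is the case `d = 1`. -/
def pochhammerStep (a d : A) (k : ℕ) : A :=
  ∏ i ∈ range k, (a + i * d)

lemma pochhammerStep_succ (a d : A) (k : ℕ) :
    pochhammerStep a d (k + 1) = a * pochhammerStep (a + d) d k := by
  simp only [pochhammerStep, prod_range_succ', Nat.cast_succ, Nat.cast_zero, zero_mul, add_zero,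
    add_one_mul, add_assoc, add_comm d]
  exact mul_comm _ _

end PochhammerStep

lemma sum_pi_fin_succ_eq_sum_insertNth {M : Type*} [AddCommMonoid M] {n : ℕ}
    {α : Fin (n + 1) → Type*} [∀ i, Fintype (α i)] (j : Fin (n + 1)) (f : (∀ i, α i) → M) :
    ∑ z, f z = ∑ x, ∑ w, f (j.insertNth x w) := by
  rw [← (Fin.insertNthEquiv α j).sum_comp, Fintype.sum_prod_type]
  rfl

/-- The number of red draws in the sequence `z`, where `1` stands for red and `0` for black. -/
def numRed {n : ℕ} (z : Fin n → Fin 2) : ℕ :=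
  ∑ t, (z t : ℕ)

lemma numRed_le {n : ℕ} (z : Fin n → Fin 2) : numRed z ≤ n := by
  simpa [numRed] using sum_le_card_nsmul univ (fun t ↦ (z t : ℕ)) 1 fun t _ ↦ Fin.is_le (z t)

lemma numRed_insertNth {n : ℕ} (j : Fin (n + 1)) (x : Fin 2) (w : Fin n → Fin 2) :
    numRed (j.insertNth (α := fun _ ↦ Fin 2) x w) = x + numRed w := by
  simp only [numRed, Fin.sum_univ_succAbove _ j, Fin.insertNth_apply_same,
    Fin.insertNth_apply_succAbove]

section PolyaWeight

variable {A : Type*} [CommSemiring A] {n : ℕ}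

/-- The numerator of the Pólya joint law, which makes sense over any commutative semiring. -/
def polyaWeight (R B Δ : A) (z : Fin n → Fin 2) : A :=
  pochhammerStep R Δ (numRed z) * pochhammerStep B Δ (n - numRed z)

lemma polyaWeight_insertNth_one (R B Δ : A) (j : Fin (n + 1)) (w : Fin n → Fin 2) :
    polyaWeight R B Δ (j.insertNth (α := fun _ ↦ Fin 2) 1 w) =
      R * polyaWeight (R + Δ) B Δ w := by
  rw [polyaWeight, numRed_insertNth, Fin.val_one, add_comm 1, Nat.add_sub_add_right,
    pochhammerStep_succ, mul_assoc, polyaWeight]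

lemma polyaWeight_insertNth_zero (R B Δ : A) (j : Fin (n + 1)) (w : Fin n → Fin 2) :
    polyaWeight R B Δ (j.insertNth (α := fun _ ↦ Fin 2) 0 w) =
      B * polyaWeight R (B + Δ) Δ w := by
  rw [polyaWeight, numRed_insertNth, Fin.val_zero, zero_add, Nat.sub_add_comm (numRed_le w),
    pochhammerStep_succ, mul_left_comm, polyaWeight]

lemma sum_polyaWeight (R B Δ : A) :
    ∑ z : Fin n → Fin 2, polyaWeight R B Δ z = pochhammerStep (R + B) Δ n := by
  induction n generalizing R B with
  | zero => simp [polyaWeight, pochhammerStep, numRed]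
  | succ n ih =>
    calc ∑ z : Fin (n + 1) → Fin 2, polyaWeight R B Δ z
      _ = B * ∑ w : Fin n → Fin 2, polyaWeight R (B + Δ) Δ w +
          R * ∑ w : Fin n → Fin 2, polyaWeight (R + Δ) B Δ w := by
        simp only [sum_pi_fin_succ_eq_sum_insertNth 0, Fin.sum_univ_two,
          polyaWeight_insertNth_zero, polyaWeight_insertNth_one, mul_sum]
      _ = (R + B) * pochhammerStep (R + B + Δ) Δ n := by
        rw [ih, ih, ← add_assoc, add_right_comm R Δ B, ← add_mul, add_comm B R]
      _ = pochhammerStep (R + B) Δ (n + 1) := (pochhammerStep_succ _ _ _).symm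

lemma sum_polyaWeight_mul_apply (R B Δ : A) (j : Fin (n + 1)) :
    ∑ z : Fin (n + 1) → Fin 2, polyaWeight R B Δ z * (z j : ℕ) =
      R * pochhammerStep (R + B + Δ) Δ n := by
  calc ∑ z : Fin (n + 1) → Fin 2, polyaWeight R B Δ z * (z j : ℕ)
    _ = R * ∑ w : Fin n → Fin 2, polyaWeight (R + Δ) B Δ w := by
      simp [sum_pi_fin_succ_eq_sum_insertNth j, polyaWeight_insertNth_one, mul_sum]
    _ = R * pochhammerStep (R + B + Δ) Δ n := by
      rw [sum_polyaWeight, add_right_comm]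

end PolyaWeight

lemma polyaP_eq_polyaWeight_div (n : ℕ) (R B Δ : ℝ) (z : Fin n → Fin 2) :
    polyaP n R B Δ z = polyaWeight R B Δ z / pochhammerStep (R + B) Δ n :=
  rfl

lemma sum_polyaP_mul_apply {n : ℕ} {R B Δ : ℝ} (hne : ∀ m < n, R + B + m * Δ ≠ 0) (j : Fin n) :
    ∑ z : Fin n → Fin 2, polyaP n R B Δ z * (z j : ℕ) = R / (R + B) := by
  obtain _ | n := n
  · exact j.elim0
  have hden : (R + B) * pochhammerStep (R + B + Δ) Δ n ≠ 0 := by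
    rw [← pochhammerStep_succ]
    exact prod_ne_zero_iff.mpr fun m hm ↦ hne m (mem_range.mp hm)
  simp only [polyaP_eq_polyaWeight_div, div_mul_eq_mul_div, ← sum_div]
  rw [sum_polyaWeight_mul_apply, pochhammerStep_succ,
    mul_div_mul_right _ _ (right_ne_zero_of_mul hden)]

lemma sum_mul_degNode {A : Type*} [CommSemiring A] {n : ℕ} (p : (Fin n → Fin 2) → A) (i : Fin n) :
    ∑ z, p z * (degNode n i z : A) =
      ((i : ℕ) + 1) * ∑ z, p z * (z i : ℕ) + ∑ j ∈ Ioi i, ∑ z, p z * (z j : ℕ) := by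
  simp only [degNode, filter_lt_eq_Ioi, Nat.cast_add, Nat.cast_mul, Nat.cast_sum, Nat.cast_one,
    mul_add, sum_add_distrib, mul_sum, mul_left_comm (p _)]
  rw [sum_comm (s := Ioi i)]

lemma sum_mul_degNode_of_forall_sum_mul_apply_eq {A : Type*} [CommSemiring A] {n : ℕ}
    {p : (Fin n → Fin 2) → A} {μ : A} (hp : ∀ j, ∑ z, p z * (z j : ℕ) = μ) (i : Fin n) :
    ∑ z, p z * (degNode n i z : A) = n * μ := by
  have hcard : (i : ℕ) + 1 + #(Ioi i) = n := by
    rw [Fin.card_Ioi]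
    lia
  simp only [sum_mul_degNode, hp, sum_const, nsmul_eq_mul, ← add_mul]
  exact_mod_cast congrArg (fun k : ℕ ↦ (k : A) * μ) hcard

/-- Covers independent draws (`Δ = 0`) and draws without replacement (`Δ < 0`). -/
theorem polyaP_expected_degree_general {n : ℕ} {R B Δ : ℝ} (hne : ∀ m < n, R + B + m * Δ ≠ 0)
    (i : Fin n) :
    ∑ z : Fin n → Fin 2, polyaP n R B Δ z * (degNode n i z : ℝ) = n * (R / (R + B)) :=
  sum_mul_degNode_of_forall_sum_mul_apply_eq (sum_polyaP_mul_apply hne) i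

/-- The expected degree of any node `V_i` under the Pólya joint law equals `n·ρ`. -/
theorem polyaP_expected_degree (n : ℕ) (hn : 1 ≤ n) (R B Δ : ℝ)
    (hR : 0 < R) (hB : 0 < B) (hΔ : 0 < Δ) (ρ : ℝ) (hρ : ρ = R / (R + B)) (i : Fin n) :
    ∑ z : Fin n → Fin 2, polyaP n R B Δ z * (degNode n i z : ℝ) = n * ρ := by
  subst hρ
  exact polyaP_expected_degree_general (fun m _ ↦ by positivity) i
end

section
/- For every i ∈ {1,…,n} and every integer k with 0 ≤ k ≤ n, the probability that node V_i has degree k under the Pólya joint law is P(deg_i = k) = C(n−i, k)·g(k)·1{k ≤ n−i} + C(n−i, k−i)·g(k−i+1)·1{k ≥ i}, where g(x) = Γ(1/δ)·Γ(ρ/δ + x)·Γ((1−ρ)/δ + n − i + 1 − x) / (Γ(ρ/δ)·Γ((1−ρ)/δ)·Γ(1/δ + n − i + 1)). -/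
open Finset

/-- `g_i^{(n-i+1)}(x) = Γ(1/δ)Γ(ρ/δ+x)Γ((1−ρ)/δ+n−i+1−x) / (Γ(ρ/δ)Γ((1−ρ)/δ)Γ(1/δ+n−i+1))`,
where `I` denotes the paper's node index `i`. -/
noncomputable def gFun (ρ δ : ℝ) (n I : ℕ) (x : ℝ) : ℝ :=
  Real.Gamma (1 / δ) * Real.Gamma (ρ / δ + x) *
      Real.Gamma ((1 - ρ) / δ + n - I + 1 - x) /
    (Real.Gamma (ρ / δ) * Real.Gamma ((1 - ρ) / δ) * Real.Gamma (1 / δ + n - I + 1))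

open ProbabilityTheory (beta)

/-!
The Pólya law is exchangeable: a tuple with `a` ones and `b` zeros has mass
`beta (R / Δ + a) (B / Δ + b) / beta (R / Δ) (B / Δ)`. The recurrence
`beta x (y + 1) + beta (x + 1) y = beta x y` says that forgetting the first bit of a tuple of length
`n + 1` gives the law of length `n`. As the degree of `V_i` only looks at the bits from `i` on, the
first `i - 1` bits may be forgotten, and node `i` becomes the first one. Its bit is then `0` or `1`,
which fixes the number of ones among the remaining `n - i` bits and gives one binomial term for each
of the two cases.
-/

section BinaryTuples

variable {n : ℕ}

/-- The number of ones of a binary tuple, in the form in which it occurs in `polyaP`. -/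
def numOnes (z : Fin n → Fin 2) : ℕ := ∑ t, (z t : ℕ)

lemma numOnes_cons (a : Fin 2) (y : Fin n → Fin 2) :
    numOnes (Fin.cons a y : Fin (n + 1) → Fin 2) = a + numOnes y := by
  simp [numOnes, Fin.sum_univ_succ]

lemma numOnes_le (z : Fin n → Fin 2) : numOnes z ≤ n := by
  simpa [numOnes] using sum_le_card_nsmul univ (fun t ↦ (z t : ℕ)) 1 fun t _ ↦ by omega

lemma sum_filter_fin_cons {α M : Type*} [Fintype α] [AddCommMonoid M]
    (p : (Fin (n + 1) → α) → Prop) [DecidablePred p] (f : (Fin (n + 1) → α) → M) :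
    ∑ z with p z, f z = ∑ a, ∑ y with p (Fin.cons a y), f (Fin.cons a y) := by
  simp_rw [sum_filter]
  rw [← (Fin.consEquiv fun _ ↦ α).sum_comp, Fintype.sum_prod_type]
  rfl

lemma card_filter_numOnes (n k : ℕ) : #{z : Fin n → Fin 2 | numOnes z = k} = n.choose k := by
  induction n generalizing k with
  | zero => cases k <;> simp [numOnes]
  | succ n ih =>
    rw [card_eq_sum_ones, sum_filter_fin_cons, Fin.sum_univ_two]
    simp only [← card_eq_sum_ones, numOnes_cons, Fin.val_zero, Fin.val_one, zero_add, ih]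
    cases k with
    | zero => simp
    | succ k => simp only [add_comm 1, Nat.add_right_cancel_iff, ih, Nat.choose_succ_succ']; ring

lemma sum_filter_numOnes {M : Type*} [AddCommMonoid M] (n k : ℕ) (f : ℕ → M) :
    ∑ z : Fin n → Fin 2 with numOnes z = k, f (numOnes z) = n.choose k • f k := by
  rw [← card_filter_numOnes, ← sum_const]
  exact sum_congr rfl fun z hz ↦ by rw [(mem_filter.1 hz).2]

/-- The degree of node `i` with its own bit counted `c` times. In `degNode` the multiplicity is
`i + 1`, but it has to stay fixed while the bits before `i` are being forgotten. -/
def weightedDegree (c : ℕ) (i : Fin n) (z : Fin n → Fin 2) : ℕ :=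
  c * (z i : ℕ) + ∑ j with i < j, (z j : ℕ)

lemma weightedDegree_zero_cons (c : ℕ) (a : Fin 2) (y : Fin n → Fin 2) :
    weightedDegree c 0 (Fin.cons a y : Fin (n + 1) → Fin 2) = c * a + numOnes y := by
  simp [weightedDegree, numOnes, sum_filter, Fin.sum_univ_succ]

lemma weightedDegree_succ (c : ℕ) (i : Fin n) (z : Fin (n + 1) → Fin 2) :
    weightedDegree c i.succ z = weightedDegree c i (Fin.tail z) := by
  simp [weightedDegree, Fin.tail, sum_filter, Fin.sum_univ_succ]

end BinaryTuples

section ExchangeableLaw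

variable {M : Type*} {n : ℕ}

/-- The exchangeable law on binary tuples which gives mass `w a b` to each tuple with `a` ones and
`b` zeros. -/
def exchangeableLaw (w : ℕ → ℕ → M) (z : Fin n → Fin 2) : M :=
  w (numOnes z) (n - numOnes z)

lemma exchangeableLaw_cons_zero (w : ℕ → ℕ → M) (y : Fin n → Fin 2) :
    exchangeableLaw w (Fin.cons 0 y : Fin (n + 1) → Fin 2) =
      w (numOnes y) (n - numOnes y + 1) := by
  simp [exchangeableLaw, numOnes_cons, Nat.sub_add_comm (numOnes_le y)]

lemma exchangeableLaw_cons_one (w : ℕ → ℕ → M) (y : Fin n → Fin 2) :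
    exchangeableLaw w (Fin.cons 1 y : Fin (n + 1) → Fin 2) =
      w (numOnes y + 1) (n - numOnes y) := by
  simp [exchangeableLaw, numOnes_cons, add_comm 1]

/-- Kolmogorov consistency of the exchangeable laws with weights `w`: appending one more bit to a
tuple splits its mass. -/
def IsConsistent [Add M] (w : ℕ → ℕ → M) : Prop :=
  ∀ a b, w a (b + 1) + w (a + 1) b = w a b

variable [AddCommMonoid M] {w : ℕ → ℕ → M}

lemma IsConsistent.sum_filter_tail (hw : IsConsistent w) (p : (Fin n → Fin 2) → Prop)
    [DecidablePred p] :
    ∑ z : Fin (n + 1) → Fin 2 with p (Fin.tail z), exchangeableLaw w z =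
      ∑ y with p y, exchangeableLaw w y := by
  rw [sum_filter_fin_cons, Fin.sum_univ_two]
  simp only [Fin.tail_cons, exchangeableLaw_cons_zero, exchangeableLaw_cons_one]
  rw [← sum_add_distrib]
  exact sum_congr rfl fun y _ ↦ hw _ _

lemma sum_exchangeableLaw_weightedDegree_zero (w : ℕ → ℕ → M) (n c k : ℕ) :
    ∑ z : Fin (n + 1) → Fin 2 with weightedDegree c 0 z = k, exchangeableLaw w z =
      n.choose k • w k (n - k + 1) +
        if c ≤ k then n.choose (k - c) • w (k - c + 1) (n - (k - c)) else 0 := by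
  rw [sum_filter_fin_cons, Fin.sum_univ_two]
  simp only [weightedDegree_zero_cons, exchangeableLaw_cons_zero, exchangeableLaw_cons_one,
    Fin.val_zero, Fin.val_one, mul_zero, mul_one, zero_add]
  congr 1
  · exact sum_filter_numOnes n k fun s ↦ w s (n - s + 1)
  · split_ifs with hck
    · have hones (y : Fin n → Fin 2) : c + numOnes y = k ↔ numOnes y = k - c := by omega
      simp only [hones]
      exact sum_filter_numOnes n (k - c) fun s ↦ w (s + 1) (n - s)
    · exact sum_eq_zero fun y hy ↦ by grind

theorem IsConsistent.sum_filter_weightedDegree (hw : IsConsistent w) (c k : ℕ) (i : Fin n) :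
    ∑ z with weightedDegree c i z = k, exchangeableLaw w z =
      (n - (i + 1)).choose k • w k (n - (i + 1) - k + 1) +
        if c ≤ k then
          (n - (i + 1)).choose (k - c) • w (k - c + 1) (n - (i + 1) - (k - c))
        else 0 := by
  induction n with
  | zero => exact i.elim0
  | succ n ih =>
    cases i using Fin.cases with
    | zero => simpa using sum_exchangeableLaw_weightedDegree_zero w n c k
    | succ i =>
      simp only [weightedDegree_succ, hw.sum_filter_tail (weightedDegree c i · = k), ih,
        Fin.val_succ, Nat.add_sub_add_right]

end ExchangeableLaw

section BetaWeight

lemma beta_add_one_right_add_beta_add_one_left {x y : ℝ} (hx : x ≠ 0) (hy : y ≠ 0)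
    (hxy : x + y ≠ 0) : beta x (y + 1) + beta (x + 1) y = beta x y := by
  have hΓ : Real.Gamma (x + y + 1) = (x + y) * Real.Gamma (x + y) := Real.Gamma_add_one hxy
  rw [beta, beta, beta, ← add_assoc, add_right_comm x 1 y, hΓ, Real.Gamma_add_one hx,
    Real.Gamma_add_one hy, ← add_div, ← mul_div_mul_left (Real.Gamma x * Real.Gamma y) _ hxy]
  ring

/-- The probability that `a + b` Bernoulli trials with a common `Beta(α, β)`-distributed parameter
start with `a` successes and continue with `b` failures (de Finetti's form of the Pólya urn). -/
noncomputable def betaWeight (α β : ℝ) (a b : ℕ) : ℝ :=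
  beta (α + a) (β + b) / beta α β

lemma betaWeight_isConsistent {α β : ℝ} (hα : 0 < α) (hβ : 0 < β) :
    IsConsistent (betaWeight α β) := fun a b ↦ by
  simp only [betaWeight, Nat.cast_add_one, ← add_assoc, ← add_div]
  rw [beta_add_one_right_add_beta_add_one_left] <;> positivity

lemma prod_range_add_natCast_mul {x d : ℝ} (hx : 0 < x) (hd : 0 < d) (n : ℕ) :
    ∏ i ∈ range n, (x + i * d) = d ^ n * (Real.Gamma (x / d + n) / Real.Gamma (x / d)) := by
  have hΓ : Real.Gamma (x / d) ≠ 0 := (Real.Gamma_pos_of_pos (by positivity)).ne'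
  induction n with
  | zero => simp [hΓ]
  | succ n ih =>
    rw [prod_range_succ, ih, Nat.cast_add_one, ← add_assoc, Real.Gamma_add_one (by positivity),
      pow_succ]
    field_simp

lemma polyaP_eq_exchangeableLaw {R B Δ : ℝ} (hR : 0 < R) (hB : 0 < B) (hΔ : 0 < Δ) {n : ℕ}
    (z : Fin n → Fin 2) :
    polyaP n R B Δ z = exchangeableLaw (betaWeight (R / Δ) (B / Δ)) z := by
  have hz : numOnes z + (n - numOnes z) = n := Nat.add_sub_cancel' (numOnes_le z)
  rw [polyaP, ← numOnes, exchangeableLaw]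
  generalize numOnes z = a at hz ⊢
  generalize n - a = b at hz ⊢
  have hsum : R / Δ + a + (B / Δ + b) = (R + B) / Δ + n := by rw [← hz]; push_cast; ring
  have hΔn : Δ ^ n = Δ ^ a * Δ ^ b := by rw [← hz, pow_add]
  rw [prod_range_add_natCast_mul hR hΔ, prod_range_add_natCast_mul hB hΔ,
    prod_range_add_natCast_mul (add_pos hR hB) hΔ, betaWeight, beta, beta, hsum, ← add_div, hΔn]
  field_simp

lemma gFun_natCast (ρ δ : ℝ) {n I a b : ℕ} (h : I + a + b = n + 1) :
    gFun ρ δ n I a = betaWeight (ρ / δ) ((1 - ρ) / δ) a b := by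
  have hn : (n : ℝ) = I + a + b - 1 := by rw [eq_sub_iff_add_eq]; exact_mod_cast h.symm
  have hδ : ρ / δ + (1 - ρ) / δ = 1 / δ := by ring
  have hzeros : (1 - ρ) / δ + n - I + 1 - a = (1 - ρ) / δ + b := by rw [hn]; ring
  have htotal : 1 / δ + n - I + 1 = ρ / δ + a + ((1 - ρ) / δ + b) := by rw [hn, ← hδ]; ring
  rw [gFun, betaWeight, beta, beta, hzeros, htotal, hδ, div_div_div_eq]
  ring

end BetaWeight

/-- The exact degree distribution of node `V_i` under the Pólya joint law:
`P(deg_i = k) = C(n−i,k)·g(k)·1{k ≤ n−i} + C(n−i,k−i)·g(k−i+1)·1{k ≥ i}`. -/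
theorem polyaP_degree_distribution (n : ℕ) (hn : 1 ≤ n) (R B Δ : ℝ)
    (hR : 0 < R) (hB : 0 < B) (hΔ : 0 < Δ) (ρ δ : ℝ)
    (hρ : ρ = R / (R + B)) (hδ : δ = Δ / (R + B)) (i : Fin n) (k : ℕ) (hk : k ≤ n) :
    ∑ z ∈ Finset.univ.filter (fun z : Fin n → Fin 2 => degNode n i z = k),
        polyaP n R B Δ z =
      (if k ≤ n - ((i : ℕ) + 1) then
          ((n - ((i : ℕ) + 1)).choose k : ℝ) * gFun ρ δ n ((i : ℕ) + 1) k
        else 0) +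
      (if (i : ℕ) + 1 ≤ k then
          ((n - ((i : ℕ) + 1)).choose (k - ((i : ℕ) + 1)) : ℝ) *
            gFun ρ δ n ((i : ℕ) + 1) ((k : ℝ) - ((i : ℕ) + 1) + 1)
        else 0) := by
  have hρδ : ρ / δ = R / Δ := by rw [hρ, hδ]; field_simp
  have hρδ' : (1 - ρ) / δ = B / Δ := by rw [hρ, hδ]; field_simp; ring
  have hw : IsConsistent (betaWeight (R / Δ) (B / Δ)) :=
    betaWeight_isConsistent (by positivity) (by positivity)
  have hsum := hw.sum_filter_weightedDegree (i + 1) k i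
  simp only [← polyaP_eq_exchangeableLaw hR hB hΔ, nsmul_eq_mul] at hsum
  refine hsum.trans (congrArg₂ (· + ·) ?_ (if_ctx_congr Iff.rfl (fun hik ↦ ?_) fun _ ↦ rfl))
  · split_ifs with hkn
    · rw [gFun_natCast ρ δ (b := n - (i + 1) - k + 1) (by omega), hρδ, hρδ']
    · rw [Nat.choose_eq_zero_of_lt (by omega), Nat.cast_zero, zero_mul]
  · have hcast : (k : ℝ) - ((i : ℕ) + 1) + 1 = (k - (i + 1) + 1 : ℕ) := by
      push_cast [Nat.cast_sub hik]; ring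
    rw [hcast, gFun_natCast ρ δ (b := n - (i + 1) - (k - (i + 1))) (by omega), hρδ, hρδ']
end

section
/- For every i ∈ {1,…,n}, the second moment of the degree of node V_i under the Pólya joint law satisfies Σ_{z ∈ {0,1}^n} p(z)·deg_i(z)² = (1 + 2i/(1/δ + n − i)) · [(n−i)·ρ·((n−i)(δ+ρ) + 1 − ρ)/(1+δ)] + i²·ρ + 2i·ρ²·(n−i)/(1 + nδ − iδ). -/
open Finset

/-! The law is exchangeable, and given that the first draw is red the remaining draws again
follow a Pólya law, with `R` replaced by `R + Δ`. Moving the indices of a monomial to the front one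
at a time therefore gives `E[∏_{i ∈ s} z_i] = ∏_{m < |s|} (R + mΔ) / (R + B + mΔ)`. As `deg_i` is a
linear form in `z` and `z_i² = z_i`, its second moment involves only the cases `|s| = 1` and
`|s| = 2`, where the values are `ρ` and `ρ (ρ + δ) / (1 + δ)`. -/

section Polya

variable {n : ℕ} {R B Δ : ℝ}

lemma polyaP_comp_perm (σ : Equiv.Perm (Fin n)) (z : Fin n → Fin 2) :
    polyaP n R B Δ (z ∘ σ) = polyaP n R B Δ z := by
  simp only [polyaP, Function.comp_apply, Equiv.sum_comp σ fun t => (z t : ℕ)]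

lemma sum_polyaP_mul_comp_perm (σ : Equiv.Perm (Fin n)) (f : (Fin n → Fin 2) → ℝ) :
    ∑ z, polyaP n R B Δ z * f (z ∘ σ) = ∑ z, polyaP n R B Δ z * f z :=
  Fintype.sum_equiv (σ.symm.arrowCongr (Equiv.refl _)) _ _ fun z => by
    change _ = polyaP n R B Δ (z ∘ σ) * f (z ∘ σ)
    rw [polyaP_comp_perm]

lemma polyaP_cons_one (z : Fin n → Fin 2) :
    polyaP (n + 1) R B Δ (Fin.cons 1 z) = R / (R + B) * polyaP n (R + Δ) B Δ z := by
  have hcount : ∑ t, ((Fin.cons 1 z : Fin (n + 1) → Fin 2) t : ℕ) = ∑ t, (z t : ℕ) + 1 := by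
    simp [Fin.sum_univ_succ, add_comm]
  have hred (k : ℕ) : R + ((k + 1 : ℕ) : ℝ) * Δ = R + Δ + k * Δ := by push_cast; ring
  have htotal (k : ℕ) : R + B + ((k + 1 : ℕ) : ℝ) * Δ = R + Δ + B + k * Δ := by push_cast; ring
  simp only [polyaP, hcount, prod_range_succ', Nat.add_sub_add_right, hred, htotal,
    Nat.cast_zero, zero_mul, add_zero]
  rw [div_mul_div_comm]
  congr 1 <;> ring

lemma polyaP_cons_zero (z : Fin n → Fin 2) :
    polyaP (n + 1) R B Δ (Fin.cons 0 z) = B / (R + B) * polyaP n R (B + Δ) Δ z := by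
  have hcount : ∑ t, ((Fin.cons 0 z : Fin (n + 1) → Fin 2) t : ℕ) = ∑ t, (z t : ℕ) := by
    simp [Fin.sum_univ_succ]
  have hle : ∑ t, (z t : ℕ) ≤ n := by
    simpa using sum_le_card_nsmul univ (fun t => (z t : ℕ)) 1 fun t _ => by omega
  have hblack (k : ℕ) : B + ((k + 1 : ℕ) : ℝ) * Δ = B + Δ + k * Δ := by push_cast; ring
  have htotal (k : ℕ) : R + B + ((k + 1 : ℕ) : ℝ) * Δ = R + (B + Δ) + k * Δ := by push_cast; ring
  simp only [polyaP, hcount, Nat.sub_add_comm hle, prod_range_succ', hblack, htotal,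
    Nat.cast_zero, zero_mul, add_zero]
  rw [div_mul_div_comm]
  congr 1 <;> ring

lemma sum_polyaP_succ_mul (f : (Fin (n + 1) → Fin 2) → ℝ) :
    ∑ z, polyaP (n + 1) R B Δ z * f z =
      B / (R + B) * ∑ z, polyaP n R (B + Δ) Δ z * f (Fin.cons 0 z) +
        R / (R + B) * ∑ z, polyaP n (R + Δ) B Δ z * f (Fin.cons 1 z) := by
  rw [← (Fin.consEquiv fun _ => Fin 2).sum_comp, Fintype.sum_prod_type, Fin.sum_univ_two]
  simp only [Fin.consEquiv, Equiv.coe_fn_mk, polyaP_cons_zero, polyaP_cons_one, mul_sum, mul_assoc]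

lemma shifted_total_ne_zero {S : ℝ} (hden : ∀ m < n + 1, R + B + m * Δ ≠ 0)
    (hS : S = R + B + Δ) : ∀ m < n, S + m * Δ ≠ 0 := fun m hm => by
  convert hden (m + 1) (by omega) using 1
  push_cast [hS]
  ring

lemma sum_polyaP (hden : ∀ m < n, R + B + m * Δ ≠ 0) : ∑ z, polyaP n R B Δ z = 1 := by
  induction n generalizing R B with
  | zero => simp [polyaP]
  | succ n ih =>
    have hfirst := sum_polyaP_succ_mul (n := n) (R := R) (B := B) (Δ := Δ) fun _ => 1
    simp only [mul_one] at hfirst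
    rw [hfirst, ih (shifted_total_ne_zero hden (by ring)),
      ih (shifted_total_ne_zero hden (by ring)), mul_one, mul_one, ← add_div, add_comm B,
      div_self (by simpa using hden 0 n.succ_pos)]

lemma sum_polyaP_mul_prod_of_zero_mem {s : Finset (Fin (n + 1))} (h0 : 0 ∈ s) :
    ∑ z, polyaP (n + 1) R B Δ z * ∏ i ∈ s, ((z i : ℕ) : ℝ) =
      R / (R + B) *
        ∑ z, polyaP n (R + Δ) B Δ z * ∏ i with Fin.succ i ∈ s, ((z i : ℕ) : ℝ) := by
  have hsplit (b : Fin 2) (z : Fin n → Fin 2) :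
      ∏ i ∈ s, (((Fin.cons b z : Fin (n + 1) → Fin 2) i : ℕ) : ℝ) =
        (b : ℕ) * ∏ i with Fin.succ i ∈ s, ((z i : ℕ) : ℝ) := by
    rw [← prod_ite_mem_eq, Fin.prod_univ_succ, prod_filter]
    simp [h0]
  simp [sum_polyaP_succ_mul, hsplit]

theorem sum_polyaP_mul_prod (hden : ∀ m < n, R + B + m * Δ ≠ 0) (s : Finset (Fin n)) :
    ∑ z, polyaP n R B Δ z * ∏ i ∈ s, ((z i : ℕ) : ℝ) =
      ∏ m ∈ range #s, (R + m * Δ) / (R + B + m * Δ) := by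
  induction n generalizing R B with
  | zero => simp [eq_empty_of_isEmpty s, polyaP]
  | succ n ih =>
    obtain rfl | ⟨i, hi⟩ := s.eq_empty_or_nonempty
    · simp [sum_polyaP hden]
    wlog h0 : 0 ∈ s generalizing s i
    · let σ := Equiv.swap 0 i
      have h0' : 0 ∈ s.map σ.toEmbedding := mem_map.2 ⟨i, hi, Equiv.swap_apply_right 0 i⟩
      have hσ := this (s.map σ.toEmbedding) 0 h0' h0'
      rw [card_map] at hσ
      rw [← hσ, ← sum_polyaP_mul_comp_perm σ]
      simp [prod_map]
    have hcard : #s = #{i | Fin.succ i ∈ s} + 1 := by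
      simpa [h0] using Fin.card_filter_univ_succ (· ∈ s)
    have hshift (m : ℕ) : (R + Δ + m * Δ) / (R + Δ + B + m * Δ) =
        (R + (m + 1 : ℕ) * Δ) / (R + B + (m + 1 : ℕ) * Δ) := by
      push_cast
      ring_nf
    rw [sum_polyaP_mul_prod_of_zero_mem h0, ih (shifted_total_ne_zero hden (by ring)), hcard,
      prod_range_succ', mul_comm]
    simp [hshift]

lemma sum_polyaP_mul_coord_mul_coord (hden : ∀ m < n, R + B + m * Δ ≠ 0) (j k : Fin n) :
    ∑ z, polyaP n R B Δ z * (((z j : ℕ) : ℝ) * (z k : ℕ)) =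
      if j = k then R / (R + B) else R / (R + B) * ((R + Δ) / (R + B + Δ)) := by
  split_ifs with hjk
  · have hidem (b : Fin 2) : ((b : ℕ) : ℝ) * (b : ℕ) = (b : ℕ) := by fin_cases b <;> simp
    simpa [hjk, hidem] using sum_polyaP_mul_prod hden {k}
  · simpa [prod_pair hjk, card_pair hjk, prod_range_succ, div_mul_div_comm] using
      sum_polyaP_mul_prod hden {j, k}

lemma sum_polyaP_mul_linear_sq (hden : ∀ m < n, R + B + m * Δ ≠ 0) (a : Fin n → ℝ) :
    ∑ z, polyaP n R B Δ z * (∑ j, a j * (z j : ℕ)) ^ 2 =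
      R / (R + B) * ∑ j, a j ^ 2 +
        R / (R + B) * ((R + Δ) / (R + B + Δ)) * ((∑ j, a j) ^ 2 - ∑ j, a j ^ 2) := by
  set ρ := R / (R + B)
  set π := ρ * ((R + Δ) / (R + B + Δ))
  calc ∑ z, polyaP n R B Δ z * (∑ j, a j * (z j : ℕ)) ^ 2
      = ∑ z, ∑ j, ∑ k, a j * a k * (polyaP n R B Δ z * (((z j : ℕ) : ℝ) * (z k : ℕ))) := by
        refine sum_congr rfl fun z _ => ?_
        rw [sq, sum_mul_sum, mul_sum]
        simp only [mul_sum]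
        exact sum_congr rfl fun j _ => sum_congr rfl fun k _ => by ring
    _ = ∑ j, ∑ k, a j * a k * ∑ z, polyaP n R B Δ z * (((z j : ℕ) : ℝ) * (z k : ℕ)) := by
        rw [sum_comm]
        refine sum_congr rfl fun j _ => ?_
        rw [sum_comm]
        simp only [mul_sum]
    _ = ∑ j, ∑ k, (π * (a j * a k) + if j = k then (ρ - π) * (a j * a k) else 0) := by
        refine sum_congr rfl fun j _ => sum_congr rfl fun k _ => ?_
        rw [sum_polyaP_mul_coord_mul_coord hden]
        split_ifs <;> ring
    _ = ρ * ∑ j, a j ^ 2 + π * ((∑ j, a j) ^ 2 - ∑ j, a j ^ 2) := by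
        simp only [sum_add_distrib, ← mul_sum, ← sum_mul, sum_ite_eq, mem_univ, if_true, ← sq]
        ring

end Polya

/-- The coefficient of `z j` in the linear form `degNode n i z`. -/
def degWeight {n : ℕ} (i j : Fin n) : ℝ :=
  if j = i then (i : ℕ) + 1 else if i < j then 1 else 0

lemma degWeight_pow {n p : ℕ} (hp : p ≠ 0) (i j : Fin n) :
    degWeight i j ^ p =
      (if j = i then ((i : ℕ) + 1 : ℝ) ^ p else 0) + if i < j then 1 else 0 := by
  obtain rfl | hji := eq_or_ne j i
  · simp [degWeight]
  · by_cases hij : i < j <;> simp [degWeight, hji, hij, hp]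

lemma degNode_eq_sum_degWeight {n : ℕ} (i : Fin n) (z : Fin n → Fin 2) :
    (degNode n i z : ℝ) = ∑ j, degWeight i j * (z j : ℕ) := by
  have hsplit := degWeight_pow one_ne_zero i
  simp only [pow_one] at hsplit
  simp [degNode, hsplit, add_mul, sum_add_distrib, sum_filter]

lemma sum_degWeight_pow {n p : ℕ} (hp : p ≠ 0) (i : Fin n) :
    ∑ j, degWeight i j ^ p = ((i : ℕ) + 1 : ℝ) ^ p + (n - ((i : ℕ) + 1 : ℝ)) := by
  have hcard : (#{j | i < j} : ℝ) = n - ((i : ℕ) + 1) := by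
    rw [filter_lt_eq_Ioi, Fin.card_Ioi, Nat.sub_sub, Nat.cast_sub (by omega)]
    push_cast
    ring
  simp [degWeight_pow hp, sum_add_distrib, hcard]

lemma second_moment_closed_form {K : Type*} [Field K] {ρ δ x N : K} (hδ : δ ≠ 0)
    (hδ1 : 1 + δ ≠ 0) (hlater : 1 + (N - x) * δ ≠ 0) :
    ρ * (x ^ 2 + (N - x)) + ρ * ((ρ + δ) / (1 + δ)) * (N ^ 2 - (x ^ 2 + (N - x))) =
      (1 + 2 * x / (1 / δ + N - x)) * ((N - x) * ρ * ((N - x) * (δ + ρ) + 1 - ρ) / (1 + δ)) +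
        x ^ 2 * ρ + 2 * x * ρ ^ 2 * (N - x) / (1 + N * δ - x * δ) := by
  have hinv : 1 / δ + N - x = (1 + (N - x) * δ) / δ := by
    field_simp
    ring
  rw [hinv, show 1 + N * δ - x * δ = 1 + (N - x) * δ by ring]
  obtain ⟨m, rfl⟩ : ∃ m, N = x + m := ⟨N - x, by ring⟩
  rw [add_sub_cancel_left] at hlater ⊢
  field_simp
  ring

theorem polyaP_degree_second_moment_general {n : ℕ} {R B Δ ρ δ : ℝ}
    (hden : ∀ m < n, R + B + m * Δ ≠ 0) (hΔ : Δ ≠ 0)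
    (hρ : ρ = R / (R + B)) (hδ : δ = Δ / (R + B)) (hδ1 : 1 + δ ≠ 0) (i : Fin n) :
    ∑ z : Fin n → Fin 2, polyaP n R B Δ z * (degNode n i z : ℝ) ^ 2 =
      (1 + 2 * ((i : ℕ) + 1 : ℝ) / (1 / δ + n - ((i : ℕ) + 1 : ℝ))) *
          ((n - ((i : ℕ) + 1 : ℝ)) * ρ *
              ((n - ((i : ℕ) + 1 : ℝ)) * (δ + ρ) + 1 - ρ) / (1 + δ)) +
        ((i : ℕ) + 1 : ℝ) ^ 2 * ρ +
        2 * ((i : ℕ) + 1 : ℝ) * ρ ^ 2 * (n - ((i : ℕ) + 1 : ℝ)) /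
          (1 + n * δ - ((i : ℕ) + 1 : ℝ) * δ) := by
  have hT : R + B ≠ 0 := by simpa using hden 0 i.pos
  have hδ0 : δ ≠ 0 := hδ ▸ div_ne_zero hΔ hT
  have hpair : (R + Δ) / (R + B + Δ) = (ρ + δ) / (1 + δ) := by
    rw [hρ, hδ]
    field_simp
  have hlater : 1 + (n - ((i : ℕ) + 1 : ℝ)) * δ ≠ 0 := by
    have h := div_ne_zero (hden (n - (i + 1)) (by omega)) hT
    rwa [Nat.cast_sub (by omega), add_div, div_self hT, mul_div_assoc, ← hδ, Nat.cast_add_one] at h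
  have hsum : ∑ j, degWeight i j = n := by simpa using sum_degWeight_pow one_ne_zero i
  simp only [degNode_eq_sum_degWeight]
  rw [sum_polyaP_mul_linear_sq hden, hpair, ← hρ, hsum, sum_degWeight_pow two_ne_zero]
  exact second_moment_closed_form hδ0 hδ1 hlater

/-- The second moment of the degree of node `V_i` under the Pólya joint law. -/
theorem polyaP_degree_second_moment (n : ℕ) (hn : 1 ≤ n) (R B Δ : ℝ)
    (hR : 0 < R) (hB : 0 < B) (hΔ : 0 < Δ) (ρ δ : ℝ)
    (hρ : ρ = R / (R + B)) (hδ : δ = Δ / (R + B)) (i : Fin n) :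
    ∑ z : Fin n → Fin 2, polyaP n R B Δ z * (degNode n i z : ℝ) ^ 2 =
      (1 + 2 * ((i : ℕ) + 1 : ℝ) / (1 / δ + n - ((i : ℕ) + 1 : ℝ))) *
          ((n - ((i : ℕ) + 1 : ℝ)) * ρ *
              ((n - ((i : ℕ) + 1 : ℝ)) * (δ + ρ) + 1 - ρ) / (1 + δ)) +
        ((i : ℕ) + 1 : ℝ) ^ 2 * ρ +
        2 * ((i : ℕ) + 1 : ℝ) * ρ ^ 2 * (n - ((i : ℕ) + 1 : ℝ)) /
          (1 + n * δ - ((i : ℕ) + 1 : ℝ) * δ) := by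
  exact polyaP_degree_second_moment_general (fun m _ => by positivity) hΔ.ne' hρ hδ
    (by rw [hδ]; positivity) i
end

section
/- For every i ∈ {1,…,n}, the variance of the degree of node V_i under the Pólya joint law is Var(deg_i) = (1 + 2i/(1/δ + n − i)) · [(n−i)·ρ·((n−i)(δ+ρ) + 1 − ρ)/(1+δ)] + i²·ρ + 2i·ρ²·(n−i)/(1 + nδ − iδ) − (nρ)². -/
open Finset

/-!
Conditioning a Pólya urn on the outcome of any one draw leaves the law of a Pólya urn on the other
draws, in which the colour drawn has been reinforced by `Δ`. Hence, whatever the positions of the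
draws, `E[z_j] = ρ` and `E[z_j z_k] = ρ (ρ + δ) / (1 + δ)` for `j ≠ k`, and the variance of a linear
form `∑ j, c j * z j` depends on `c` only through `∑ j, c j` and `∑ j, c j ^ 2`: it equals
`ρ (1 - ρ) (∑ c² + δ (∑ c)²) / (1 + δ)`. The degree of `V_i` has coefficient `i` at `z_i` and `1` at
the later draws, so that `∑ c = n` and `∑ c² = i² + (n - i)`.
-/

section LinearForm

variable {Ω ι K : Type*} [Fintype Ω] [Fintype ι] [CommRing K]

lemma sum_mul_linearForm (p : Ω → K) (x : Ω → ι → K) (c : ι → K) {μ : K}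
    (hmean : ∀ j, ∑ ω, p ω * x ω j = μ) :
    ∑ ω, p ω * ∑ j, c j * x ω j = μ * ∑ j, c j := by
  calc ∑ ω, p ω * ∑ j, c j * x ω j
      = ∑ j, c j * ∑ ω, p ω * x ω j := by
        simp only [mul_sum]
        rw [sum_comm]
        simp only [mul_left_comm]
    _ = μ * ∑ j, c j := by simp only [hmean, ← sum_mul, mul_comm μ]

lemma sum_mul_linearForm_sq (p : Ω → K) (x : Ω → ι → K) (c : ι → K) {s t : K}
    (hdiag : ∀ j, ∑ ω, p ω * x ω j ^ 2 = s)
    (hoff : ∀ j k, j ≠ k → ∑ ω, p ω * (x ω j * x ω k) = t) :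
    ∑ ω, p ω * (∑ j, c j * x ω j) ^ 2 = t * (∑ j, c j) ^ 2 + (s - t) * ∑ j, c j ^ 2 := by
  classical
  have hmoment (j k : ι) :
      ∑ ω, p ω * (x ω j * x ω k) = t + if j = k then s - t else 0 := by
    split_ifs with hjk
    · simp only [← hjk, ← sq, hdiag, add_sub_cancel]
    · rw [hoff j k hjk, add_zero]
  calc ∑ ω, p ω * (∑ j, c j * x ω j) ^ 2
      = ∑ ω, ∑ j, ∑ k, c j * c k * (p ω * (x ω j * x ω k)) := by
        refine sum_congr rfl fun ω _ => ?_
        rw [sq, sum_mul_sum, mul_sum]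
        simp only [mul_sum]
        congr! 2
        ring
    _ = ∑ j, ∑ k, c j * c k * ∑ ω, p ω * (x ω j * x ω k) := by
        rw [sum_comm]
        refine sum_congr rfl fun j _ => ?_
        rw [sum_comm]
        simp only [mul_sum]
    _ = t * (∑ j, c j) ^ 2 + (s - t) * ∑ j, c j ^ 2 := by
        simp only [hmoment, mul_add, mul_ite, mul_zero, sum_add_distrib, sum_ite_eq, mem_univ,
          if_true, ← sum_mul, ← sum_mul_sum, sq]
        ring

end LinearForm

section Urn

lemma prod_range_succ_add_mul {K : Type*} [CommSemiring K] (n : ℕ) (a d : K) :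
    ∏ i ∈ range (n + 1), (a + i * d) = a * ∏ i ∈ range n, (a + d + i * d) := by
  rw [prod_range_succ', mul_comm]
  congr! 2 <;> push_cast <;> ring

lemma sum_val_insertNth {n : ℕ} (j : Fin (n + 1)) (a : Fin 2) (z : Fin n → Fin 2) :
    ∑ t, (j.insertNth (α := fun _ => Fin 2) a z t : ℕ) = a + ∑ t, (z t : ℕ) := by
  simp [Fin.sum_univ_succAbove _ j]

lemma sum_val_le {n : ℕ} (z : Fin n → Fin 2) : ∑ t, (z t : ℕ) ≤ n := by
  simpa using sum_le_card_nsmul univ (fun t => (z t : ℕ)) 1 fun t _ => by lia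

variable {n : ℕ} {R B Δ : ℝ}

lemma polyaP_insertNth_one (j : Fin (n + 1)) (z : Fin n → Fin 2) :
    polyaP (n + 1) R B Δ (j.insertNth 1 z) = R / (R + B) * polyaP n (R + Δ) B Δ z := by
  have hcount : ∑ t, (j.insertNth (α := fun _ => Fin 2) 1 z t : ℕ) = ∑ t, (z t : ℕ) + 1 := by
    rw [sum_val_insertNth, add_comm, Fin.val_one]
  unfold polyaP
  rw [hcount, Nat.add_sub_add_right, prod_range_succ_add_mul, prod_range_succ_add_mul,
    add_right_comm R Δ B, mul_assoc, mul_div_mul_comm]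

lemma polyaP_insertNth_zero (j : Fin (n + 1)) (z : Fin n → Fin 2) :
    polyaP (n + 1) R B Δ (j.insertNth 0 z) = B / (R + B) * polyaP n R (B + Δ) Δ z := by
  have hcount : ∑ t, (j.insertNth (α := fun _ => Fin 2) 0 z t : ℕ) = ∑ t, (z t : ℕ) := by
    rw [sum_val_insertNth, Fin.val_zero, zero_add]
  unfold polyaP
  rw [hcount, Nat.sub_add_comm (sum_val_le z), prod_range_succ_add_mul, prod_range_succ_add_mul,
    ← add_assoc R B Δ, mul_left_comm, mul_div_mul_comm]

lemma sum_polyaP_mul_eq_insertNth (j : Fin (n + 1)) (f : (Fin (n + 1) → Fin 2) → ℝ) :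
    ∑ z, polyaP (n + 1) R B Δ z * f z =
      B / (R + B) * ∑ z, polyaP n R (B + Δ) Δ z * f (j.insertNth 0 z) +
        R / (R + B) * ∑ z, polyaP n (R + Δ) B Δ z * f (j.insertNth 1 z) := by
  rw [← (Fin.insertNthEquiv (fun _ => Fin 2) j).sum_comp, Fintype.sum_prod_type, Fin.sum_univ_two]
  simp only [Fin.insertNthEquiv, Equiv.coe_fn_mk, polyaP_insertNth_zero, polyaP_insertNth_one,
    mul_sum, mul_assoc]

lemma reinforced_add_mul_ne_zero {S T : ℝ} (hden : ∀ m < n + 1, S + m * Δ ≠ 0) (hT : T = S + Δ) :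
    ∀ m < n, T + m * Δ ≠ 0 := by
  intro m hm
  convert hden (m + 1) (by lia) using 1
  push_cast [hT]
  ring

lemma sum_polyaP_mul_val (hden : ∀ m < n, R + B + m * Δ ≠ 0) (j : Fin n) :
    ∑ z, polyaP n R B Δ z * ((z j : ℕ) : ℝ) = R / (R + B) := by
  obtain _ | n := n
  · exact j.elim0
  have hred := sum_polyaP (reinforced_add_mul_ne_zero hden (add_right_comm R Δ B))
  simp [sum_polyaP_mul_eq_insertNth j, hred]

lemma sum_polyaP_mul_val_sq (hden : ∀ m < n, R + B + m * Δ ≠ 0) (j : Fin n) :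
    ∑ z, polyaP n R B Δ z * ((z j : ℕ) : ℝ) ^ 2 = R / (R + B) := by
  have hidem (a : Fin 2) : ((a : ℕ) : ℝ) ^ 2 = (a : ℕ) := by fin_cases a <;> simp
  simp only [hidem, sum_polyaP_mul_val hden]

lemma sum_polyaP_mul_val_mul_val (hden : ∀ m < n, R + B + m * Δ ≠ 0) {j k : Fin n} (hjk : j ≠ k) :
    ∑ z, polyaP n R B Δ z * (((z j : ℕ) : ℝ) * ((z k : ℕ) : ℝ)) =
      R / (R + B) * ((R + Δ) / (R + Δ + B)) := by
  obtain _ | n := n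
  · exact j.elim0
  obtain ⟨k, rfl⟩ := Fin.exists_succAbove_eq hjk.symm
  have hred := sum_polyaP_mul_val (reinforced_add_mul_ne_zero hden (add_right_comm R Δ B)) k
  simp [sum_polyaP_mul_eq_insertNth j, hred]

lemma polyaP_variance_linearForm (hden : ∀ m < n, R + B + m * Δ ≠ 0) (hS : R + B ≠ 0)
    (hSΔ : R + B + Δ ≠ 0) {ρ δ : ℝ} (hρ : ρ = R / (R + B)) (hδ : δ = Δ / (R + B))
    (c : Fin n → ℝ) :
    ∑ z, polyaP n R B Δ z * (∑ j, c j * ((z j : ℕ) : ℝ)) ^ 2 -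
        (∑ z, polyaP n R B Δ z * ∑ j, c j * ((z j : ℕ) : ℝ)) ^ 2 =
      ρ * (1 - ρ) * (∑ j, c j ^ 2 + δ * (∑ j, c j) ^ 2) / (1 + δ) := by
  have hδ1 : 1 + δ ≠ 0 := by
    rw [hδ, one_add_div hS]
    exact div_ne_zero hSΔ hS
  have hreinforced : (R + Δ) / (R + Δ + B) = (ρ + δ) / (1 + δ) := by
    rw [hρ, hδ, ← add_div, one_add_div hS, div_div_div_cancel_right₀ hS, add_right_comm]
  have hmean := sum_mul_linearForm (polyaP n R B Δ) (fun z j => ((z j : ℕ) : ℝ)) c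
    (sum_polyaP_mul_val hden)
  have hsecond := sum_mul_linearForm_sq (polyaP n R B Δ) (fun z j => ((z j : ℕ) : ℝ)) c
    (sum_polyaP_mul_val_sq hden) fun _ _ => sum_polyaP_mul_val_mul_val hden
  rw [hsecond, hmean, hreinforced, ← hρ]
  field_simp
  ring

end Urn

section Degree

variable {n : ℕ} (i : Fin n)

/-- The coefficient of the draw `z j` in `degNode n i z`, viewed as a linear form in the draws. -/
def degCoeff (j : Fin n) : ℝ :=
  (if j = i then (i : ℕ) + 1 else 0) + if i < j then 1 else 0

lemma degNode_eq_sum_degCoeff (z : Fin n → Fin 2) :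
    (degNode n i z : ℝ) = ∑ j, degCoeff i j * ((z j : ℕ) : ℝ) := by
  simp [degNode, degCoeff, add_mul, sum_add_distrib, sum_filter]

lemma cast_card_filter_lt : (#{j | i < j} : ℝ) = n - ((i : ℕ) + 1 : ℝ) := by
  rw [filter_lt_eq_Ioi, Fin.card_Ioi, Nat.sub_right_comm, Nat.sub_sub,
    Nat.cast_sub i.isLt, Nat.cast_succ]

lemma sum_degCoeff : ∑ j, degCoeff i j = n := by
  simp [degCoeff, sum_add_distrib, cast_card_filter_lt]

lemma sum_degCoeff_sq :
    ∑ j, degCoeff i j ^ 2 = ((i : ℕ) + 1 : ℝ) ^ 2 + (n - ((i : ℕ) + 1 : ℝ)) := by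
  have hsq (j : Fin n) : degCoeff i j ^ 2 =
      (if j = i then ((i : ℕ) + 1 : ℝ) ^ 2 else 0) + if i < j then 1 else 0 := by
    rcases eq_or_ne j i with rfl | hne
    · simp [degCoeff]
    · simp [degCoeff, hne]
  simp [hsq, sum_add_distrib, cast_card_filter_lt]

end Degree

lemma degree_variance_closed_form {K : Type*} [Field K] {n a ρ δ : K} (hδ : δ ≠ 0)
    (hδ1 : 1 + δ ≠ 0) (hm : 1 + (n - a) * δ ≠ 0) :
    ρ * (1 - ρ) * (a ^ 2 + (n - a) + δ * n ^ 2) / (1 + δ) =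
      (1 + 2 * a / (1 / δ + n - a)) * ((n - a) * ρ * ((n - a) * (δ + ρ) + 1 - ρ) / (1 + δ)) +
        a ^ 2 * ρ + 2 * a * ρ ^ 2 * (n - a) / (1 + n * δ - a * δ) - (n * ρ) ^ 2 := by
  obtain ⟨m, rfl⟩ : ∃ m, n = m + a := ⟨n - a, (sub_add_cancel n a).symm⟩
  have hinv : 1 / δ + (m + a) - a = (1 + m * δ) / δ := by field_simp; ring
  have hdenom : 1 + (m + a) * δ - a * δ = 1 + m * δ := by ring
  rw [add_sub_cancel_right] at hm ⊢
  rw [hinv, hdenom]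
  field_simp
  ring

/-- The case `Δ = -1` is sampling without replacement. -/
theorem polyaP_degree_variance_general (n : ℕ) (R B Δ : ℝ) (hΔ : Δ ≠ 0)
    (hden : ∀ m < n, R + B + m * Δ ≠ 0) (hSΔ : R + B + Δ ≠ 0) (ρ δ : ℝ)
    (hρ : ρ = R / (R + B)) (hδ : δ = Δ / (R + B)) (i : Fin n) :
    (∑ z : Fin n → Fin 2, polyaP n R B Δ z * (degNode n i z : ℝ) ^ 2) -
        (∑ z : Fin n → Fin 2, polyaP n R B Δ z * (degNode n i z : ℝ)) ^ 2 =
      (1 + 2 * ((i : ℕ) + 1 : ℝ) / (1 / δ + n - ((i : ℕ) + 1 : ℝ))) *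
          ((n - ((i : ℕ) + 1 : ℝ)) * ρ *
              ((n - ((i : ℕ) + 1 : ℝ)) * (δ + ρ) + 1 - ρ) / (1 + δ)) +
        ((i : ℕ) + 1 : ℝ) ^ 2 * ρ +
        2 * ((i : ℕ) + 1 : ℝ) * ρ ^ 2 * (n - ((i : ℕ) + 1 : ℝ)) /
          (1 + n * δ - ((i : ℕ) + 1 : ℝ) * δ) -
        (n * ρ) ^ 2 := by
  have hS : R + B ≠ 0 := by simpa using hden 0 i.pos
  have hδ0 : δ ≠ 0 := hδ ▸ div_ne_zero hΔ hS
  have hδm {x : ℝ} (hx : R + B + x * Δ ≠ 0) : 1 + x * δ ≠ 0 := by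
    rw [hδ, ← mul_div_assoc, one_add_div hS]
    exact div_ne_zero hx hS
  have hlater : R + B + ((n : ℝ) - ((i : ℕ) + 1 : ℝ)) * Δ ≠ 0 := by
    simpa [Nat.cast_sub i.isLt] using hden (n - (i + 1)) (by lia)
  simp only [degNode_eq_sum_degCoeff]
  rw [polyaP_variance_linearForm hden hS hSΔ hρ hδ, sum_degCoeff, sum_degCoeff_sq]
  exact degree_variance_closed_form hδ0 (by simpa using hδm (x := 1) (by simpa)) (hδm hlater)

/-- The variance of the degree of node `V_i` under the Pólya joint law. -/
theorem polyaP_degree_variance (n : ℕ) (hn : 1 ≤ n) (R B Δ : ℝ)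
    (hR : 0 < R) (hB : 0 < B) (hΔ : 0 < Δ) (ρ δ : ℝ)
    (hρ : ρ = R / (R + B)) (hδ : δ = Δ / (R + B)) (i : Fin n) :
    (∑ z : Fin n → Fin 2, polyaP n R B Δ z * (degNode n i z : ℝ) ^ 2) -
        (∑ z : Fin n → Fin 2, polyaP n R B Δ z * (degNode n i z : ℝ)) ^ 2 =
      (1 + 2 * ((i : ℕ) + 1 : ℝ) / (1 / δ + n - ((i : ℕ) + 1 : ℝ))) *
          ((n - ((i : ℕ) + 1 : ℝ)) * ρ *
              ((n - ((i : ℕ) + 1 : ℝ)) * (δ + ρ) + 1 - ρ) / (1 + δ)) +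
        ((i : ℕ) + 1 : ℝ) ^ 2 * ρ +
        2 * ((i : ℕ) + 1 : ℝ) * ρ ^ 2 * (n - ((i : ℕ) + 1 : ℝ)) /
          (1 + n * δ - ((i : ℕ) + 1 : ℝ) * δ) -
        (n * ρ) ^ 2 :=
  polyaP_degree_variance_general n R B Δ hΔ.ne' (fun m _ => by positivity) (by positivity) ρ δ
    hρ hδ i
end

section
/- Let E be a symmetric relation on {1,…,n} (loops allowed). Then there exist a weight function Φ : {1,…,n} → ℝ and a real number τ > 0 such that for all i, j (including i = j), E(i,j) holds if and only if Φ(i) + Φ(j) > τ, if and only if there exist a bijection σ of {1,…,n} and a binary n-tuple z ∈ {0,1}^n such that for all i, j, E(σ(i), σ(j)) holds if and only if z_{max(i,j)} = 1. -/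
/-!
Put `x = Φ - τ / 2`, so that `i` and `j` are adjacent exactly when `0 < x i + x j`. The sign of a
sum is that of the summand with larger absolute value. List the nodes by increasing `|x i|`, with
nonpositive weights after positive ones among ties: then the later of two nodes alone decides
whether they are adjacent, according to the sign of its weight. Conversely, the weights `± (i + 1)`,
with the sign prescribed by the `i`-th bit, realize any bit sequence.
-/

section Dominance

variable {K : Type*} [AddCommGroup K] [LinearOrder K]

/-- The sort key arranging elements of an ordered group by dominance: of two summands, the one with
the larger key determines whether the sum is positive. Elements are compared by absolute value
first; the second component puts `-a` after `a` for `0 < a`, since `a + -a` is not positive. -/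
def dominanceKey (a : K) : K ×ₗ K :=
  toLex (|a|, -a)

theorem monotone_dominanceKey_of_strictMono_abs {ι : Type*} [PartialOrder ι] {x : ι → K}
    (hx : StrictMono fun i => |x i|) : Monotone fun i => dominanceKey (x i) :=
  StrictMono.monotone fun _ _ hij => Prod.Lex.toLex_lt_toLex.mpr (Or.inl (hx hij))

variable [IsOrderedAddMonoid K]

theorem add_pos_iff_of_abs_lt_abs {a b : K} (h : |a| < |b|) : 0 < a + b ↔ 0 < b := by
  rcases le_or_gt b 0 with hb | hb
  · have hab : a < -b := (le_abs_self a).trans_lt (h.trans_eq (abs_of_nonpos hb))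
    exact iff_of_false (lt_neg_iff_add_neg.mp hab).not_gt hb.not_gt
  · have hab : -a < b := (neg_le_abs a).trans_lt (h.trans_eq (abs_of_pos hb))
    exact iff_of_true (neg_lt_iff_pos_add'.mp hab) hb

theorem add_pos_iff_of_abs_eq_abs {a b : K} (h : |a| = |b|) (hba : b ≤ a) :
    0 < a + b ↔ 0 < b := by
  rcases abs_eq_abs.mp h with rfl | rfl
  · exact pos_add_self_iff
  · have hb : b ≤ 0 := le_neg_self_iff.mp hba
    simp only [neg_add_cancel, lt_irrefl, hb.not_gt]

theorem add_pos_iff_of_dominanceKey_le {a b : K} (h : dominanceKey a ≤ dominanceKey b) :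
    0 < a + b ↔ 0 < b := by
  rcases Prod.Lex.toLex_le_toLex.mp h with habs | ⟨habs, hneg⟩
  · exact add_pos_iff_of_abs_lt_abs habs
  · exact add_pos_iff_of_abs_eq_abs habs (neg_le_neg_iff.mp hneg)

theorem add_pos_iff_pos_max_of_monotone_dominanceKey {ι : Type*} [LinearOrder ι] {x : ι → K}
    (hx : Monotone fun i => dominanceKey (x i)) (i j : ι) :
    0 < x i + x j ↔ 0 < x (max i j) := by
  rcases le_total i j with hij | hji
  · rw [max_eq_right hij, add_pos_iff_of_dominanceKey_le (hx hij)]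
  · rw [max_eq_left hji, add_comm, add_pos_iff_of_dominanceKey_le (hx hji)]

end Dominance

section SignedRank

variable {K : Type*} [Ring K] [LinearOrder K] [IsStrictOrderedRing K] {n : ℕ}

variable (K) in
/-- Weights realizing the bit sequence `z`: node `i` has weight `i + 1` if `z i = 1` and `-(i + 1)`
otherwise. The shift by one makes the sign of the weight of node `0` record `z 0`. -/
def signedRank (z : Fin n → Fin 2) (i : Fin n) : K :=
  if z i = 1 then (i : K) + 1 else -((i : K) + 1)

theorem abs_signedRank (z : Fin n → Fin 2) (i : Fin n) : |signedRank K z i| = (i : K) + 1 := by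
  have hi : (0 : K) ≤ (i : K) + 1 := by positivity
  rw [signedRank, apply_ite abs, abs_neg, ite_self, abs_of_nonneg hi]

theorem signedRank_pos_iff (z : Fin n → Fin 2) (i : Fin n) : 0 < signedRank K z i ↔ z i = 1 := by
  have hi : (0 : K) < (i : K) + 1 := by positivity
  unfold signedRank
  split_ifs with hz
  · exact iff_of_true hi hz
  · exact iff_of_false (neg_neg_of_pos hi).not_gt hz

theorem signedRank_add_pos_iff (z : Fin n → Fin 2) (i j : Fin n) :
    0 < signedRank K z i + signedRank K z j ↔ z (max i j) = 1 := by
  have habs : StrictMono fun i => |signedRank K z i| := fun i j hij => by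
    simpa only [abs_signedRank, add_lt_add_iff_right, Nat.cast_lt, Fin.val_fin_lt] using hij
  rw [add_pos_iff_pos_max_of_monotone_dominanceKey (monotone_dominanceKey_of_strictMono_abs habs),
    signedRank_pos_iff]

end SignedRank

section ThresholdGraph

variable {V : Type*} (E : V → V → Prop)

theorem exists_threshold_iff_exists_add_pos {K : Type*} [Field K] [LinearOrder K]
    [IsStrictOrderedRing K] :
    (∃ (Φ : V → K) (τ : K), 0 < τ ∧ ∀ u v, E u v ↔ Φ u + Φ v > τ) ↔
      ∃ x : V → K, ∀ u v, E u v ↔ 0 < x u + x v := by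
  constructor
  · rintro ⟨Φ, τ, -, hE⟩
    refine ⟨fun u => Φ u - τ / 2, fun u v => ?_⟩
    rw [hE, sub_add_sub_comm, add_halves, sub_pos]
  · rintro ⟨x, hE⟩
    refine ⟨fun u => x u + 1 / 2, 1, one_pos, fun u v => ?_⟩
    rw [hE, add_add_add_comm, add_halves, gt_iff_lt, lt_add_iff_pos_left]

variable {n : ℕ} [Finite V]

theorem exists_equiv_monotone_comp {α : Type*} [LinearOrder α] (hV : Nat.card V = n)
    (f : V → α) : ∃ σ : Fin n ≃ V, Monotone (f ∘ σ) :=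
  let e : Fin n ≃ V := (Finite.equivFinOfCardEq hV).symm
  ⟨(Tuple.sort (f ∘ e)).trans e, Tuple.monotone_sort (f ∘ e)⟩

theorem exists_add_pos_iff_sequential {K : Type*} [Ring K] [LinearOrder K]
    [IsStrictOrderedRing K] (hV : Nat.card V = n) :
    (∃ x : V → K, ∀ u v, E u v ↔ 0 < x u + x v) ↔
      ∃ (σ : Fin n ≃ V) (z : Fin n → Fin 2), ∀ i j, E (σ i) (σ j) ↔ z (max i j) = 1 := by
  constructor
  · rintro ⟨x, hE⟩
    obtain ⟨σ, hσ⟩ := exists_equiv_monotone_comp hV fun v => dominanceKey (x v)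
    refine ⟨σ, fun i => if 0 < x (σ i) then 1 else 0, fun i j => ?_⟩
    calc E (σ i) (σ j) ↔ 0 < x (σ i) + x (σ j) := hE _ _
      _ ↔ 0 < x (σ (max i j)) :=
        add_pos_iff_pos_max_of_monotone_dominanceKey (x := x ∘ σ) hσ i j
      _ ↔ (if 0 < x (σ (max i j)) then 1 else 0 : Fin 2) = 1 := by simp
  · rintro ⟨σ, z, hE⟩
    refine ⟨fun v => signedRank K z (σ.symm v), fun u v => ?_⟩
    rw [signedRank_add_pos_iff, ← hE, σ.apply_symm_apply, σ.apply_symm_apply]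

theorem thresholdGraph_iff_sequential_general {K : Type*} [Field K] [LinearOrder K]
    [IsStrictOrderedRing K] (hV : Nat.card V = n) :
    (∃ (Φ : V → K) (τ : K), 0 < τ ∧ ∀ u v, E u v ↔ Φ u + Φ v > τ) ↔
      ∃ (σ : Fin n ≃ V) (z : Fin n → Fin 2), ∀ i j, E (σ i) (σ j) ↔ z (max i j) = 1 :=
  (exists_threshold_iff_exists_add_pos E).trans (exists_add_pos_iff_sequential E hV)

end ThresholdGraph

/-- A symmetric relation on `{1,…,n}` (loops allowed) is a threshold graph
(there exist weights `Φ` and a threshold `τ > 0` with `E i j ↔ Φ i + Φ j > τ`)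
if and only if, up to node relabeling, it is obtained by the sequential
universal/isolated-node construction from a binary `n`-tuple `z`,
i.e. `E (σ i) (σ j) ↔ z_{max(i,j)} = 1`. -/
theorem thresholdGraph_iff_sequential (n : ℕ) (E : Fin n → Fin n → Prop)
    (hsym : ∀ i j, E i j → E j i) :
    (∃ (Φ : Fin n → ℝ) (τ : ℝ), 0 < τ ∧ ∀ i j, E i j ↔ Φ i + Φ j > τ) ↔
      (∃ (σ : Equiv.Perm (Fin n)) (z : Fin n → Fin 2),
        ∀ i j, E (σ i) (σ j) ↔ z (max i j) = 1) :=
  thresholdGraph_iff_sequential_general E (Nat.card_fin n)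
end

section
/- Let z ∈ {0,1}^n, let A be the n×n real matrix with A_{ij} = z_{max(i,j)}, let D be the diagonal matrix with D_{ii} = deg_i(z) = i·z_i + Σ_{j=i+1}^n z_j, and let L = D − A. Then L·u_1 = 0 for u_1 = (1,1,…,1)ᵀ, and for every m ∈ {2,…,n}, L·u_m = deg_m(z)·u_m, where u_m = (1,…,1, −(m−1), 0,…,0)ᵀ has its first m−1 entries equal to 1, its m-th entry equal to −(m−1), and its remaining entries equal to 0. -/
open Finset

/-- Adjacency matrix of the threshold graph of `z`: `A_{ij} = z_{max(i,j)}`. -/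
def adjMatrix (n : ℕ) (z : Fin n → Fin 2) : Matrix (Fin n) (Fin n) ℝ :=
  Matrix.of fun i j => ((z (max i j) : ℕ) : ℝ)

/-- Laplacian matrix `L = D − A` of the threshold graph of `z`. -/
def lapMatrix (n : ℕ) (z : Fin n → Fin 2) : Matrix (Fin n) (Fin n) ℝ :=
  Matrix.diagonal (fun i => (degNode n i z : ℝ)) - adjMatrix n z

/-- The eigenvector `u_m` (for `m : Fin n` with `(m : ℕ) ≥ 1`, i.e. paper's `m+1 ≥ 2`):
first `m` entries `1`, the `m`-th entry `−m`, remaining entries `0`. -/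
def uVec (n : ℕ) (m : Fin n) : Fin n → ℝ :=
  fun i => if i < m then 1 else if i = m then -((m : ℕ) : ℝ) else 0

/-!
`(L v)ᵢ` is the weighted sum of the differences `vᵢ - vⱼ`, with weight `wᵢ` for every `j ≤ i` and
weight `wⱼ` for every `j > i`. For `v = 1` all differences vanish. Let `v = uₘ`, whose entries up to
`m` add up to zero and whose later entries are zero. In a row `i ≥ m`, the subtracted entries have
the common weight `wᵢ` and cancel, which leaves `degᵢ vᵢ`. In a row `i < m`, only the columns
`j ≥ m` have `vⱼ ≠ vᵢ`, with `vᵢ - vⱼ = m` for `j = m` (counting from one) and `vᵢ - vⱼ = 1`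
beyond it, so the sum is `m wₘ + ∑_{j > m} wⱼ = degₘ`.
-/

open Matrix

section HelmertVec

variable {ι R : Type*} [LinearOrder ι] [LocallyFiniteOrderBot ι] [NonAssocRing R] {i m : ι}

variable (R) in
/-- The vector `u_m = (1, …, 1, -k, 0, …, 0)`, with `-k` in position `m` and `k` the number of
entries before it; these are the Helmert contrasts of statistics. It is zero if `m` is least. -/
def helmertVec (m : ι) : ι → R :=
  fun i => if i < m then 1 else if i = m then -(#(Iio m) : R) else 0

theorem helmertVec_of_lt (h : i < m) : helmertVec R m i = 1 :=
  if_pos h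

theorem helmertVec_self (m : ι) : helmertVec R m m = -(#(Iio m) : R) := by
  simp [helmertVec]

theorem helmertVec_of_gt (h : m < i) : helmertVec R m i = 0 := by
  simp [helmertVec, h.not_gt, h.ne']

theorem sum_Iic_helmertVec (h : m ≤ i) : ∑ j ∈ Iic i, helmertVec R m j = 0 := by
  have hsupp : ∑ j ∈ Iic m, helmertVec R m j = ∑ j ∈ Iic i, helmertVec R m j :=
    sum_subset (Iic_subset_Iic.2 h) fun j _ hj => helmertVec_of_gt (by simpa using hj)
  have hIio : ∑ j ∈ Iio m, helmertVec R m j = #(Iio m) := by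
    rw [sum_congr rfl fun j hj => helmertVec_of_lt (mem_Iio.1 hj)]
    simp
  rw [← hsupp, ← add_sum_Iio_eq_sum_Iic, helmertVec_self, hIio, neg_add_cancel]

end HelmertVec

section WeightedThreshold

variable {ι R : Type*} [LinearOrder ι]

/-- Adjacency matrix of the weighted threshold graph with node weights `w`: nodes `i` and `j` are
joined with the weight of the larger one. As in the definition of `adjMatrix`, the diagonal is kept:
every node carries a loop, which cancels in the Laplacian. -/
def thresholdAdj (w : ι → R) : Matrix ι ι R :=
  Matrix.of fun i j => w (max i j)

variable [LocallyFiniteOrderBot ι] [LocallyFiniteOrderTop ι]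

/-- Degree of node `i` in the weighted threshold graph, the loop at `i` included. -/
def thresholdDegree [AddCommMonoid R] (w : ι → R) (i : ι) : R :=
  #(Iic i) • w i + ∑ j ∈ Ioi i, w j

/-- Laplacian `D - A` of the weighted threshold graph. -/
def thresholdLap [AddCommGroup R] (w : ι → R) : Matrix ι ι R :=
  Matrix.diagonal (thresholdDegree w) - thresholdAdj w

theorem sum_Iic_add_sum_Ioi [Fintype ι] [AddCommMonoid R] (f : ι → R) (i : ι) :
    ∑ j ∈ Iic i, f j + ∑ j ∈ Ioi i, f j = ∑ j, f j := by
  rw [← sum_filter_add_sum_filter_not univ (· ≤ i) f]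
  simp only [not_le, filter_ge_eq_Iic, filter_lt_eq_Ioi]

theorem thresholdAdj_mulVec_apply [Fintype ι] [NonUnitalNonAssocSemiring R] (w v : ι → R) (i : ι) :
    (thresholdAdj w *ᵥ v) i = w i * ∑ j ∈ Iic i, v j + ∑ j ∈ Ioi i, w j * v j := by
  have hIic : ∑ j ∈ Iic i, w (max i j) * v j = w i * ∑ j ∈ Iic i, v j := by
    rw [mul_sum]
    exact sum_congr rfl fun j hj => by rw [max_eq_left (mem_Iic.1 hj)]
  have hIoi : ∑ j ∈ Ioi i, w (max i j) * v j = ∑ j ∈ Ioi i, w j * v j :=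
    sum_congr rfl fun j hj => by rw [max_eq_right (mem_Ioi.1 hj).le]
  rw [← hIic, ← hIoi, sum_Iic_add_sum_Ioi]
  rfl

theorem thresholdLap_mulVec_apply [Fintype ι] [NonUnitalNonAssocRing R] (w v : ι → R) (i : ι) :
    (thresholdLap w *ᵥ v) i =
      w i * ∑ j ∈ Iic i, (v i - v j) + ∑ j ∈ Ioi i, w j * (v i - v j) := by
  simp only [thresholdLap, sub_mulVec, Pi.sub_apply, mulVec_diagonal, thresholdAdj_mulVec_apply,
    thresholdDegree, add_mul, smul_mul_assoc, sum_mul, sum_sub_distrib, sum_const, mul_sub,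
    mul_smul_comm]
  abel

theorem thresholdLap_mulVec_one [Fintype ι] [NonAssocRing R] (w : ι → R) :
    thresholdLap w *ᵥ 1 = 0 := by
  ext i
  simp [thresholdLap_mulVec_apply]

section Eigenvectors

variable [Fintype ι] [NonAssocRing R] {i m : ι} (w : ι → R)

theorem thresholdLap_mulVec_helmertVec_of_lt (h : i < m) :
    (thresholdLap w *ᵥ helmertVec R m) i = thresholdDegree w m := by
  have hIic : ∑ j ∈ Iic i, (1 - helmertVec R m j) = 0 :=
    sum_eq_zero fun j hj => by rw [helmertVec_of_lt ((mem_Iic.1 hj).trans_lt h), sub_self]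
  have hsupp : ∑ j ∈ Ici m, w j * (1 - helmertVec R m j) =
      ∑ j ∈ Ioi i, w j * (1 - helmertVec R m j) :=
    sum_subset (fun j hj => mem_Ioi.2 (h.trans_le (mem_Ici.1 hj))) fun j _ hj => by
      rw [helmertVec_of_lt (by simpa using hj), sub_self, mul_zero]
  have hIoi : ∑ j ∈ Ioi m, w j * (1 - helmertVec R m j) = ∑ j ∈ Ioi m, w j :=
    sum_congr rfl fun j hj => by rw [helmertVec_of_gt (mem_Ioi.1 hj), sub_zero, mul_one]
  have hself : w m * (1 - helmertVec R m m) = #(Iic m) • w m := by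
    rw [helmertVec_self, Iic_eq_cons_Iio, card_cons, sub_neg_eq_add, add_comm, ← Nat.cast_succ,
      nsmul_eq_mul, Nat.cast_comm]
  rw [thresholdLap_mulVec_apply, helmertVec_of_lt h, hIic, mul_zero, zero_add, ← hsupp,
    ← add_sum_Ioi_eq_sum_Ici, hself, hIoi, thresholdDegree]

theorem thresholdLap_mulVec_helmertVec_of_ge (h : m ≤ i) :
    (thresholdLap w *ᵥ helmertVec R m) i = thresholdDegree w i * helmertVec R m i := by
  have hAdj : (thresholdAdj w *ᵥ helmertVec R m) i = 0 := by
    rw [thresholdAdj_mulVec_apply, sum_Iic_helmertVec h, mul_zero, zero_add]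
    exact sum_eq_zero fun j hj => by rw [helmertVec_of_gt (h.trans_lt (mem_Ioi.1 hj)), mul_zero]
  rw [thresholdLap, sub_mulVec, Pi.sub_apply, mulVec_diagonal, hAdj, sub_zero]

theorem thresholdLap_mulVec_helmertVec (m : ι) :
    thresholdLap w *ᵥ helmertVec R m = thresholdDegree w m • helmertVec R m := by
  ext i
  rw [Pi.smul_apply, smul_eq_mul]
  obtain hlt | rfl | hgt := lt_trichotomy i m
  · rw [thresholdLap_mulVec_helmertVec_of_lt w hlt, helmertVec_of_lt hlt, mul_one]
  · exact thresholdLap_mulVec_helmertVec_of_ge w le_rfl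
  · rw [thresholdLap_mulVec_helmertVec_of_ge w hgt.le, helmertVec_of_gt hgt, mul_zero, mul_zero]

end Eigenvectors

theorem lapMatrix_eigenvectors_general [Fintype ι] [NonAssocRing R] (w : ι → R) :
    thresholdLap w *ᵥ 1 = 0 ∧
      ∀ m, thresholdLap w *ᵥ helmertVec R m = thresholdDegree w m • helmertVec R m :=
  ⟨thresholdLap_mulVec_one w, thresholdLap_mulVec_helmertVec w⟩

end WeightedThreshold

theorem degNode_cast (n : ℕ) (z : Fin n → Fin 2) (i : Fin n) :
    (degNode n i z : ℝ) = thresholdDegree (fun j => ((z j : ℕ) : ℝ)) i := by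
  simp [degNode, thresholdDegree, filter_lt_eq_Ioi]

theorem lapMatrix_eq_thresholdLap (n : ℕ) (z : Fin n → Fin 2) :
    lapMatrix n z = thresholdLap fun i => ((z i : ℕ) : ℝ) := by
  simp only [lapMatrix, degNode_cast]
  rfl

theorem uVec_eq_helmertVec (n : ℕ) (m : Fin n) : uVec n m = helmertVec ℝ m := by
  ext i
  simp only [uVec, helmertVec, Fin.card_Iio]

/-- The all-ones vector is a `0`-eigenvector of the Laplacian, and each `u_m`
(for paper index `m ≥ 2`) is an eigenvector with eigenvalue `deg_m(z)`. -/
theorem lapMatrix_eigenvectors (n : ℕ) (z : Fin n → Fin 2) :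
    (lapMatrix n z).mulVec (fun _ => 1) = 0 ∧
      ∀ m : Fin n, 1 ≤ (m : ℕ) →
        (lapMatrix n z).mulVec (uVec n m) = (degNode n m z : ℝ) • uVec n m := by
  simp only [lapMatrix_eq_thresholdLap, degNode_cast, uVec_eq_helmertVec]
  exact (lapMatrix_eigenvectors_general _).imp_right fun h m _ => h m
end

section
/- Let z ∈ {0,1}^n with z_n = 1, and let W be the associated averaging matrix. Then every diagonal entry of W is strictly positive, and every entry of W² is strictly positive; in particular W is irreducible and aperiodic. -/
open Finset

/-- `N_i = 1 + Σ_{j ≠ i} z_{max(i,j)}`, the number of neighbors of node `i` plus one. -/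
def Nval (n : ℕ) (z : Fin n → Fin 2) (i : Fin n) : ℝ :=
  1 + ∑ j ∈ Finset.univ.filter (fun j => j ≠ i), ((z (max i j) : ℕ) : ℝ)

/-- The averaging matrix `W_{ij} = (1{i=j} + 1{i≠j}·z_{max(i,j)}) / N_i`. -/
noncomputable def Wmat (n : ℕ) (z : Fin n → Fin 2) : Matrix (Fin n) (Fin n) ℝ :=
  Matrix.of fun i j =>
    ((if i = j then 1 else ((z (max i j) : ℕ) : ℝ)) / Nval n z i)

/-! Since `z_n = 1`, the last node is joined to every other node, and every node carries a loop.
Hence any `i` and `j` are connected by the walk `i → n → j`, whose weight is a positive summand of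
`(W ^ 2) i j`; the other summands are nonnegative. -/

section MatrixPositivity

variable {l m n R : Type*} [Fintype m] [NonUnitalNonAssocSemiring R] [PartialOrder R]
  [IsOrderedCancelAddMonoid R] [PosMulStrictMono R]

theorem mul_apply_pos_of_nonneg {A : Matrix l m R} {B : Matrix m n R} {i : l} {k : m} {j : n}
    (hA : ∀ x, 0 ≤ A i x) (hB : ∀ x, 0 ≤ B x j) (hik : 0 < A i k) (hkj : 0 < B k j) :
    0 < (A * B) i j := by
  rw [Matrix.mul_apply]
  exact sum_pos' (fun x _ => mul_nonneg (hA x) (hB x)) ⟨k, mem_univ k, mul_pos hik hkj⟩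

end MatrixPositivity

section AveragingMatrix

variable {n : ℕ} (z : Fin n → Fin 2)

theorem Nval_pos (i : Fin n) : 0 < Nval n z i := by
  unfold Nval
  positivity

theorem Wmat_nonneg (i j : Fin n) : 0 ≤ Wmat n z i j := by
  have hN := Nval_pos z i
  simp only [Wmat, Matrix.of_apply]
  positivity

variable {z}

theorem Wmat_pos_iff {i j : Fin n} : 0 < Wmat n z i j ↔ i = j ∨ z (max i j) = 1 := by
  rw [Wmat, Matrix.of_apply, div_pos_iff_of_pos_right (Nval_pos z i)]
  split_ifs with hij
  · simp [hij]
  · simp only [hij, false_or, Nat.cast_pos, Fin.val_pos_iff, Fin.pos_iff_ne_zero]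
    lia

end AveragingMatrix

/-- If the last node is universal, every diagonal entry of `W` is strictly positive and
every entry of `W²` is strictly positive; in particular `W` is irreducible and aperiodic. -/
theorem Wmat_irreducible_aperiodic (n : ℕ) (hn : 0 < n) (z : Fin n → Fin 2)
    (hz : z ⟨n - 1, Nat.sub_lt hn Nat.one_pos⟩ = 1) :
    (∀ i : Fin n, 0 < Wmat n z i i) ∧
      (∀ i j : Fin n, 0 < (Wmat n z * Wmat n z) i j) := by
  refine ⟨fun i => Wmat_pos_iff.mpr (Or.inl rfl), fun i j => ?_⟩
  set last : Fin n := ⟨n - 1, Nat.sub_lt hn Nat.one_pos⟩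
  have le_last (k : Fin n) : k ≤ last := Nat.le_sub_one_of_lt k.isLt
  have to_last : 0 < Wmat n z i last :=
    Wmat_pos_iff.mpr (Or.inr (by rwa [max_eq_right (le_last i)]))
  have from_last : 0 < Wmat n z last j :=
    Wmat_pos_iff.mpr (Or.inr (by rwa [max_eq_left (le_last j)]))
  exact mul_apply_pos_of_nonneg (Wmat_nonneg z i) (Wmat_nonneg z · j) to_last from_last
end
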